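/- Two s-graphons ν₁ and ν₂ satisfy C(ν₁,k) = C(ν₂,k) for every k ∈ ℕ if and only if their shapes coincide, i.e. C(ν₁) = C(ν₂). -/

import Mathlib

open MeasureTheory Topology Filter

noncomputable section

/-- The unit square `[0,1]²`. -/
abbrev Sq : Type := unitInterval × unitInterval

/-- Convergence of a sequence of subsets in the Vietoris topology
(upper + lower Vietoris convergence). -/
def VietorisTendsto {X : Type*} [TopologicalSpace X] (A : ℕ → Set X) (B : Set X) : Prop :=
  (∀ U : Set X, IsOpen U → B ⊆ U → ∀ᶠ n in atTop, A n ⊆ U) ∧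
  (∀ U : Set X, IsOpen U → (B ∩ U).Nonempty → ∀ᶠ n in atTop, (A n ∩ U).Nonempty)

/-- A measure on the unit square is symmetric if it is invariant under the coordinate swap. -/
def IsSymmSq (μ : Measure Sq) : Prop := μ.map Prod.swap = μ

/-- s-graphons: symmetric Borel probability measures on the unit square,
with the weak topology. -/
def SGraphon : Type := {μ : ProbabilityMeasure Sq // IsSymmSq (μ : Measure Sq)}

instance : TopologicalSpace SGraphon :=
  inferInstanceAs (TopologicalSpace {μ : ProbabilityMeasure Sq // IsSymmSq (μ : Measure Sq)})

/-- The underlying measure of an s-graphon. -/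
def SGraphon.toMeasure (μ : SGraphon) : Measure Sq := (μ.1 : Measure Sq)

/-- A non-negative bounded Borel function on the unit square is fairly distributed
if all its horizontal and vertical sections integrate (w.r.t. Lebesgue measure) to 1. -/
structure FairlyDistributed (f : Sq → ℝ) : Prop where
  measurable : Measurable f
  nonneg : ∀ p, 0 ≤ f p
  bounded : ∃ C : ℝ, ∀ p, f p ≤ C
  row : ∀ x : unitInterval, ∫ v, f (x, v) = 1
  col : ∀ y : unitInterval, ∫ u, f (u, y) = 1

/-- The density `φ(f,μ)`. -/
def phiFn (f : Sq → ℝ) (μ : Measure Sq) (p : Sq) : ℝ :=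
  ∫ q, f (q.1, p.1) * f (q.2, p.2) ∂μ

/-- The measure `Φ(f,μ)`, with density `φ(f,μ)` w.r.t. 2-dimensional Lebesgue measure. -/
def PhiMeas (f : Sq → ℝ) (μ : Measure Sq) : Measure Sq :=
  volume.withDensity fun p => ENNReal.ofReal (phiFn f μ p)

/-- The shape of a measure `μ` on the unit square: the weak closure of the set of
(s-graphons corresponding to) the measures `Φ(f,μ)`, `f` continuous fairly distributed. -/
def shapeM (μ : Measure Sq) : Set SGraphon :=
  closure {ν : SGraphon | ∃ f : Sq → ℝ, FairlyDistributed f ∧ Continuous f ∧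
    ν.toMeasure = PhiMeas f μ}

/-- The shape `C(μ)` of an s-graphon. -/
def shape (μ : SGraphon) : Set SGraphon := shapeM μ.toMeasure

/-- A fractional partition into `k` parts: non-negative Borel functions on `[0,1]`
summing to the constant function 1, each integrating to `1/k`. -/
def IsFracPartition (k : ℕ) (f : Fin k → unitInterval → ℝ) : Prop :=
  (∀ i, Measurable (f i)) ∧ (∀ i x, 0 ≤ f i x) ∧ (∀ x, ∑ i, f i x = 1) ∧
    ∀ i, ∫ x, f i x = 1 / k

/-- The `k`-shape `C(μ,k)`: the closure in `ℝ^{k×k}` of the set of density matrices of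
fractional partitions into `k` parts. -/
def kShape (μ : Measure Sq) (k : ℕ) : Set (Matrix (Fin k) (Fin k) ℝ) :=
  closure {M | ∃ f : Fin k → unitInterval → ℝ, IsFracPartition k f ∧
    ∀ i j, M i j = ∫ p, f i p.1 * f j p.2 ∂μ}

/-- `M_k^*`: symmetric `k×k` matrices with non-negative entries summing to 1. -/
def Mstar (k : ℕ) : Set (Matrix (Fin k) (Fin k) ℝ) :=
  {M | M.IsSymm ∧ (∀ i j, 0 ≤ M i j) ∧ ∑ i, ∑ j, M i j = 1}

/-- The index `i` (0-based) with `u ∈ [i/k, (i+1)/k)` (and `i = k-1` for `u = 1`). -/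
def gridIdx (k : ℕ) (hk : 0 < k) (u : unitInterval) : Fin k :=
  ⟨min ⌊(u : ℝ) * k⌋₊ (k - 1), lt_of_le_of_lt (min_le_right _ _) (Nat.sub_lt hk one_pos)⟩

/-- The measure `μ_M` associated to a `k×k` matrix `M`: its density w.r.t. 2-dimensional
Lebesgue measure equals `k² M(i,j)` on the square `[i/k,(i+1)/k) × [j/k,(j+1)/k)` (0-based). -/
def muM {k : ℕ} (M : Matrix (Fin k) (Fin k) ℝ) : Measure Sq :=
  if hk : 0 < k then
    volume.withDensity fun p =>
      ENNReal.ofReal ((k : ℝ) ^ 2 * M (gridIdx k hk p.1) (gridIdx k hk p.2))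
  else 0

/-- `C̃(μ,k)`: the `k`-shape of `μ`, interpreted as a set of s-graphons. -/
def kShapeTilde (μ : Measure Sq) (k : ℕ) : Set SGraphon :=
  {ν : SGraphon | ∃ M ∈ kShape μ k, ν.toMeasure = muM M}

/-- The interval `I_i = [i/k, (i+1)/k)` (0-based), with `I_{k-1} = [(k-1)/k, 1]`,
as a subset of `[0,1]`. -/
def Ik (k : ℕ) (i : Fin k) : Set unitInterval :=
  if (i : ℕ) + 1 = k then Subtype.val ⁻¹' Set.Icc (((i : ℕ) : ℝ) / k) 1
  else Subtype.val ⁻¹' Set.Ico (((i : ℕ) : ℝ) / k) ((((i : ℕ) : ℝ) + 1) / k)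

lemma cont_int {X : Type*} [TopologicalSpace X] [CompactSpace X] [MeasurableSpace X]
    [OpensMeasurableSpace X] {μ : Measure X} [IsFiniteMeasure μ] {f : X → ℝ} (hf : Continuous f) :
    Integrable f μ :=
  hf.integrable_of_hasCompactSupport (HasCompactSupport.of_compactSpace f)

lemma phiFn_meas {f : Sq → ℝ} (hc : Continuous f) (μ : Measure Sq) [IsProbabilityMeasure μ] :
    Measurable (phiFn f μ) := by
  have : StronglyMeasurable (Function.uncurry fun (q p : Sq) => f (q.1, p.1) * f (q.2, p.2)) := by
    apply Continuous.stronglyMeasurable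
    unfold Function.uncurry
    fun_prop
  exact (this.integral_prod_left (μ := μ)).measurable

lemma phiFn_nonneg {f : Sq → ℝ} (hf : FairlyDistributed f) (μ : Measure Sq) (p : Sq) :
    0 ≤ phiFn f μ p :=
  integral_nonneg fun _ => mul_nonneg (hf.nonneg _) (hf.nonneg _)

lemma intPhi {f : Sq → ℝ} (hf : FairlyDistributed f) (hc : Continuous f) (μ : Measure Sq)
    [IsProbabilityMeasure μ] {F : Sq → ℝ} (hF : Continuous F) :
    ∫ p, F p ∂(PhiMeas f μ) = ∫ q, (∫ p : Sq, f (q.1, p.1) * f (q.2, p.2) * F p) ∂μ := by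
  unfold PhiMeas
  rw [integral_withDensity_eq_integral_toReal_smul (phiFn_meas hc μ).ennreal_ofReal (by simp)]
  rw [integral_integral_swap]
  · refine integral_congr_ae (Filter.Eventually.of_forall fun p => ?_)
    simp only [smul_eq_mul]
    rw [ENNReal.toReal_ofReal (phiFn_nonneg hf μ p), integral_mul_const]
    rfl
  · apply cont_int
    unfold Function.uncurry
    fun_prop

lemma row2 {f : Sq → ℝ} (hf : FairlyDistributed f) (q : Sq) :
    ∫ p : Sq, f (q.1, p.1) * f (q.2, p.2) = 1 := by
  rw [Measure.volume_eq_prod, integral_prod_mul (fun u => f (q.1, u)) (fun v => f (q.2, v)),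
    hf.row, hf.row, one_mul]

lemma Phi_prob {f : Sq → ℝ} (hf : FairlyDistributed f) (hc : Continuous f) (μ : Measure Sq)
    [IsProbabilityMeasure μ] : IsProbabilityMeasure (PhiMeas f μ) := by
  have h := intPhi hf hc μ (F := fun _ => 1) continuous_const
  simp only [mul_one, row2 hf] at h
  simp only [integral_const, smul_eq_mul, mul_one, probReal_univ] at h
  constructor
  rw [Measure.real, ENNReal.toReal_eq_one_iff] at h
  exact h

lemma Phi_symm {f : Sq → ℝ} (hc : Continuous f) (μ : Measure Sq)
    [IsProbabilityMeasure μ] (hμ : IsSymmSq μ) : IsSymmSq (PhiMeas f μ) := by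
  have hs : ∀ p : Sq, phiFn f μ p.swap = phiFn f μ p := by
    intro p
    unfold phiFn
    conv_rhs => rw [← hμ]
    rw [integral_map measurable_swap.aemeasurable]
    · refine integral_congr_ae (Filter.Eventually.of_forall fun q => ?_)
      simp [mul_comm]
    · apply Continuous.aestronglyMeasurable
      fun_prop
  unfold IsSymmSq
  ext s hs'
  rw [Measure.map_apply measurable_swap hs']
  unfold PhiMeas
  rw [withDensity_apply _ hs', withDensity_apply _ (measurable_swap hs')]
  have mp : MeasurePreserving (Prod.swap : Sq → Sq) volume volume := Measure.measurePreserving_swap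
  rw [← mp.setLIntegral_comp_preimage hs' (phiFn_meas hc μ).ennreal_ofReal]
  simp only [hs]

instance (ν : SGraphon) : IsProbabilityMeasure ν.toMeasure := by
  unfold SGraphon.toMeasure; infer_instance

def mkPhi (f : Sq → ℝ) (hf : FairlyDistributed f) (hc : Continuous f) (ν : SGraphon) : SGraphon :=
  ⟨⟨PhiMeas f ν.toMeasure, Phi_prob hf hc _⟩, Phi_symm hc _ ν.2⟩

lemma mkPhi_meas (f : Sq → ℝ) (hf : FairlyDistributed f) (hc : Continuous f) (ν : SGraphon) :
    (mkPhi f hf hc ν).toMeasure = PhiMeas f ν.toMeasure := rfl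

lemma mkPhi_mem (f : Sq → ℝ) (hf : FairlyDistributed f) (hc : Continuous f) (ν : SGraphon) :
    mkPhi f hf hc ν ∈ {ν' : SGraphon | ∃ f : Sq → ℝ, FairlyDistributed f ∧ Continuous f ∧
    ν'.toMeasure = PhiMeas f ν.toMeasure} := ⟨f, hf, hc, rfl⟩

lemma sg_tendsto {W : ℕ → SGraphon} {ν : SGraphon}
    (h : ∀ F : Sq → ℝ, Continuous F →
      Tendsto (fun n => ∫ p, F p ∂(W n).toMeasure) atTop (𝓝 (∫ p, F p ∂ν.toMeasure))) :
    Tendsto W atTop (𝓝 ν) := by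
  refine tendsto_subtype_rng.2 ?_
  rw [ProbabilityMeasure.tendsto_iff_forall_integral_tendsto]
  intro F
  exact h F F.continuous

lemma sg_cont {F : Sq → ℝ} (hF : Continuous F) :
    Continuous fun ν : SGraphon => ∫ p, F p ∂ν.toMeasure := by
  have h : Continuous (fun ν : SGraphon => (ν.1 : ProbabilityMeasure Sq)) := continuous_subtype_val
  exact ProbabilityMeasure.continuous_iff_forall_continuous_integral.1 h
    (BoundedContinuousFunction.mkOfCompact ⟨F, hF⟩)

/-- pushing a continuous partition through a kernel -/
lemma push_part {f : Sq → ℝ} (hf : FairlyDistributed f) (hc : Continuous f) {k : ℕ}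
    {c : Fin k → unitInterval → ℝ} (hP : IsFracPartition k c) (hcc : ∀ i, Continuous (c i)) :
    IsFracPartition k (fun i x => ∫ u, f (x, u) * c i u) := by
  have hI : ∀ i x, Integrable (fun u => f (x, u) * c i u) := fun i x => by
    apply cont_int
    have := hcc i
    fun_prop
  refine ⟨fun i => ?_, fun i x => ?_, fun x => ?_, fun i => ?_⟩
  · have : StronglyMeasurable (Function.uncurry fun (u x : unitInterval) => f (x, u) * c i u) := by
      apply Continuous.stronglyMeasurable
      unfold Function.uncurry
      have := hcc i
      fun_prop
    exact (this.integral_prod_left (μ := volume)).measurable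
  · exact integral_nonneg fun u => mul_nonneg (hf.nonneg _) (hP.2.1 _ _)
  · rw [← integral_finsetSum _ (fun i _ => hI i x)]
    simp_rw [← Finset.mul_sum, hP.2.2.1, mul_one]
    exact hf.row x
  · rw [integral_integral_swap]
    · simp_rw [integral_mul_const, hf.col, one_mul]
      exact hP.2.2.2 i
    · apply cont_int
      unfold Function.uncurry
      have := hcc i
      fun_prop

lemma push_int {f : Sq → ℝ} (hf : FairlyDistributed f) (hc : Continuous f) (μ : Measure Sq)
    [IsProbabilityMeasure μ] {a b : unitInterval → ℝ} (ha : Continuous a) (hb : Continuous b) :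
    ∫ p, a p.1 * b p.2 ∂(PhiMeas f μ) =
      ∫ q, (∫ u, f (q.1, u) * a u) * (∫ u, f (q.2, u) * b u) ∂μ := by
  rw [intPhi hf hc μ (by fun_prop)]
  refine integral_congr_ae (Filter.Eventually.of_forall fun q => ?_)
  simp only
  rw [← integral_prod_mul, ← Measure.volume_eq_prod]
  refine integral_congr_ae (Filter.Eventually.of_forall fun p => ?_)
  simp only
  ring

/-- kernel attached to two partitions -/
def kern {k : ℕ} (c h : Fin k → unitInterval → ℝ) (p : Sq) : ℝ := k * ∑ i, c i p.1 * h i p.2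

lemma kern_cont {k : ℕ} {c h : Fin k → unitInterval → ℝ} (hc : ∀ i, Continuous (c i))
    (hh : ∀ i, Continuous (h i)) : Continuous (kern c h) := by
  unfold kern
  fun_prop

lemma kern_fd {k : ℕ} (hk : 0 < k) {c h : Fin k → unitInterval → ℝ} (hc : ∀ i, Continuous (c i))
    (hh : ∀ i, Continuous (h i)) (hcP : IsFracPartition k c) (hhP : IsFracPartition k h) :
    FairlyDistributed (kern c h) := by
  have hk' : (k : ℝ) ≠ 0 := by positivity
  have hcont := kern_cont hc hh
  refine ⟨hcont.measurable, fun p => ?_, ?_, fun x => ?_, fun y => ?_⟩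
  · exact mul_nonneg (by positivity)
      (Finset.sum_nonneg fun i _ => mul_nonneg (hcP.2.1 _ _) (hhP.2.1 _ _))
  · obtain ⟨C, hC⟩ := (isCompact_range hcont).bddAbove
    exact ⟨C, fun p => hC ⟨p, rfl⟩⟩
  · unfold kern
    simp only
    rw [integral_const_mul, integral_finsetSum _ (fun i _ => (cont_int (hh i)).const_mul _)]
    simp_rw [integral_const_mul, hhP.2.2.2, ← Finset.sum_mul, hcP.2.2.1]
    field_simp
  · unfold kern
    simp only
    rw [integral_const_mul, integral_finsetSum _ (fun i _ => (cont_int (hc i)).mul_const _)]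
    simp_rw [integral_mul_const, hcP.2.2.2, ← Finset.mul_sum, hhP.2.2.1]
    field_simp

lemma kern_int {k : ℕ} (hk : 0 < k) {c h : Fin k → unitInterval → ℝ} (hc : ∀ i, Continuous (c i))
    (hh : ∀ i, Continuous (h i)) (hcP : IsFracPartition k c) (hhP : IsFracPartition k h)
    (μ : Measure Sq) [IsProbabilityMeasure μ] {F : Sq → ℝ} (hF : Continuous F) :
    ∫ p, F p ∂(PhiMeas (kern c h) μ) =
      ∑ i, ∑ j, (∫ q, c i q.1 * c j q.2 ∂μ) * (k ^ 2 * ∫ p : Sq, h i p.1 * h j p.2 * F p) := by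
  rw [intPhi (kern_fd hk hc hh hcP hhP) (kern_cont hc hh) μ hF]
  have h1 : ∀ q : Sq, (∫ p : Sq, kern c h (q.1, p.1) * kern c h (q.2, p.2) * F p) =
      ∑ i, ∑ j, (c i q.1 * c j q.2) * (k ^ 2 * ∫ p : Sq, h i p.1 * h j p.2 * F p) := by
    intro q
    have h2 : ∀ p : Sq, kern c h (q.1, p.1) * kern c h (q.2, p.2) * F p =
      ∑ i, ∑ j, (c i q.1 * c j q.2) * (k ^ 2 * (h i p.1 * h j p.2 * F p)) := by
      intro p
      unfold kern
      simp only
      rw [mul_mul_mul_comm, Finset.sum_mul_sum, Finset.mul_sum, Finset.sum_mul]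
      refine Finset.sum_congr rfl fun i _ => ?_
      rw [Finset.mul_sum, Finset.sum_mul]
      refine Finset.sum_congr rfl fun j _ => ?_
      ring
    have hi : ∀ i j, Integrable (fun p : Sq =>
        (c i q.1 * c j q.2) * (k ^ 2 * (h i p.1 * h j p.2 * F p))) := fun i j => by
      apply cont_int
      have := hh i
      have := hh j
      fun_prop
    simp_rw [h2]
    rw [integral_finsetSum _ (fun i _ => integrable_finsetSum _ fun j _ => hi i j)]
    refine Finset.sum_congr rfl fun i _ => ?_
    rw [integral_finsetSum _ (fun j _ => hi i j)]
    refine Finset.sum_congr rfl fun j _ => ?_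
    rw [integral_const_mul, integral_const_mul]
  simp_rw [h1]
  have hi : ∀ i j, Integrable (fun q : Sq =>
      (c i q.1 * c j q.2) * (k ^ 2 * ∫ p : Sq, h i p.1 * h j p.2 * F p)) μ := fun i j => by
    apply cont_int
    have := hc i
    have := hc j
    fun_prop
  rw [integral_finsetSum _ (fun i _ => integrable_finsetSum _ fun j _ => hi i j)]
  refine Finset.sum_congr rfl fun i _ => ?_
  rw [integral_finsetSum _ (fun j _ => hi i j)]
  refine Finset.sum_congr rfl fun j _ => ?_
  rw [integral_mul_const]

def ramp (n i : ℕ) (x : ℝ) : ℝ :=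
  if i = 0 then 0 else if n ≤ i then 1 else max 0 (min 1 (i + 1 / 2 - n * x))

lemma ramp_cont (n i : ℕ) : Continuous (ramp n i) := by
  unfold ramp
  split_ifs <;> fun_prop

lemma ramp_mono (n i : ℕ) (x : ℝ) : ramp n i x ≤ ramp n (i + 1) x := by
  unfold ramp
  have h0 : 0 ≤ max (0:ℝ) (min 1 (((i + 1 : ℕ) : ℝ) + 1 / 2 - n * x)) := le_max_left _ _
  have h1 : max (0:ℝ) (min 1 (i + 1 / 2 - n * x)) ≤ 1 := max_le zero_le_one (min_le_left _ _)
  split_ifs <;> first | contradiction | omega | exact zero_le_one | exact le_rfl | exact h0 | exact h1 | skip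
  push_cast
  exact max_le_max le_rfl (min_le_min le_rfl (by linarith))

lemma ramp_integral (n i : ℕ) (hn : 0 < n) (hi : i ≤ n) :
    ∫ x : unitInterval, ramp n i x = (i : ℝ) / n := by
  have hn' : (0:ℝ) < n := by exact_mod_cast hn
  by_cases h0 : i = 0
  · simp [ramp, h0]
  by_cases h1 : i = n
  · subst h1
    simp [ramp, h0]
  have hi1 : (1:ℝ) ≤ i := by exact_mod_cast Nat.one_le_iff_ne_zero.2 h0
  have hi2 : (i:ℝ) + 1 ≤ n := by
    have : i + 1 ≤ n := by omega
    exact_mod_cast this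
  rw [unitInterval.volume_def, integral_subtype_comap measurableSet_Icc (ramp n i),
    integral_Icc_eq_integral_Ioc, ← intervalIntegral.integral_of_le zero_le_one]
  set a : ℝ := (i - 1 / 2) / n with ha
  set b : ℝ := (i + 1 / 2) / n with hb
  have na : n * a = i - 1 / 2 := by rw [ha]; field_simp
  have nb : n * b = i + 1 / 2 := by rw [hb]; field_simp
  have hii : ∀ u v, IntervalIntegrable (ramp n i) volume u v :=
    fun u v => (ramp_cont n i).intervalIntegrable u v
  have a0 : 0 ≤ a := by rw [ha]; apply div_nonneg <;> linarith
  have ab : a ≤ b := by rw [ha, hb]; gcongr; linarith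
  have b1 : b ≤ 1 := by rw [hb, div_le_one hn']; linarith
  have hr : ∀ x, ramp n i x = max 0 (min 1 (i + 1 / 2 - n * x)) := by
    intro x
    unfold ramp
    rw [if_neg h0, if_neg (by omega)]
  rw [← intervalIntegral.integral_add_adjacent_intervals (hii 0 a) (hii a 1),
    ← intervalIntegral.integral_add_adjacent_intervals (hii a b) (hii b 1)]
  have e1 : ∫ x in (0:ℝ)..a, ramp n i x = ∫ x in (0:ℝ)..a, (1:ℝ) := by
    apply intervalIntegral.integral_congr
    intro x hx
    rw [Set.uIcc_of_le a0] at hx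
    have : n * x ≤ n * a := by gcongr; exact hx.2
    simp only [hr]
    rw [min_eq_left (by linarith), max_eq_right zero_le_one]
  have e2 : ∫ x in a..b, ramp n i x = ∫ x in a..b, ((i:ℝ) + 1 / 2 - n * x) := by
    apply intervalIntegral.integral_congr
    intro x hx
    rw [Set.uIcc_of_le ab] at hx
    have h3 : n * x ≤ n * b := by gcongr; exact hx.2
    have h4 : n * a ≤ n * x := by gcongr; exact hx.1
    simp only [hr]
    rw [min_eq_right (by linarith), max_eq_right (by linarith)]
  have e3 : ∫ x in b..1, ramp n i x = ∫ x in b..1, (0:ℝ) := by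
    apply intervalIntegral.integral_congr
    intro x hx
    rw [Set.uIcc_of_le b1] at hx
    have h4 : n * b ≤ n * x := by gcongr; exact hx.1
    simp only [hr]
    rw [min_eq_right (by linarith), max_eq_left (by linarith)]
  rw [e1, e2, e3]
  rw [intervalIntegral.integral_sub (by simp) (by
    apply Continuous.intervalIntegrable; fun_prop), intervalIntegral.integral_const_mul, integral_id]
  simp only [intervalIntegral.integral_const, smul_eq_mul]
  rw [ha, hb]
  field_simp
  ring

lemma ramp_supp (n i : ℕ) (hi : i < n) (x : unitInterval)
    (h : ramp n (i + 1) x - ramp n i x ≠ 0) : (i:ℝ) - 1 / 2 ≤ n * x ∧ n * (x:ℝ) ≤ i + 3 / 2 := by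
  have hn' : (0:ℝ) < n := by exact_mod_cast (by omega : 0 < n)
  have x0 := x.2.1
  have x1 := x.2.2
  have y0 : 0 ≤ n * (x:ℝ) := by positivity
  have y1 : n * (x:ℝ) ≤ n := by nlinarith
  constructor
  · by_contra hc
    push Not at hc
    apply h
    have hi0 : i ≠ 0 := by
      rintro rfl
      simp at hc
      linarith
    unfold ramp
    rw [if_neg (by omega : ¬ i + 1 = 0), if_neg hi0, if_neg (by omega : ¬ n ≤ i)]
    by_cases hni : n ≤ i + 1
    · rw [if_pos hni, min_eq_left (by linarith)]
      simp
    rw [if_neg hni]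
    push_cast
    rw [min_eq_left (by linarith), min_eq_left (by linarith)]
    simp
  · by_contra hc
    push Not at hc
    apply h
    have hi0 : ¬ n ≤ i + 1 := by
      intro hh
      have : (n:ℝ) ≤ i + 1 := by exact_mod_cast hh
      linarith
    unfold ramp
    rw [if_neg (by omega : ¬ i + 1 = 0), if_neg hi0, if_neg (by omega : ¬ n ≤ i)]
    rw [max_eq_left ((min_le_right _ _).trans (by push_cast; linarith))]
    by_cases hi0 : i = 0
    · simp [hi0]
    rw [if_neg hi0]
    push_cast
    rw [max_eq_left ((min_le_right _ _).trans (by linarith))]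
    simp

lemma exists_part (n : ℕ) (hn : 0 < n) : ∃ h : Fin n → unitInterval → ℝ,
    IsFracPartition n h ∧ (∀ i, Continuous (h i)) ∧
      ∀ i x y, h i x ≠ 0 → h i y ≠ 0 → dist x y ≤ 2 / n := by
  have hn' : (0:ℝ) < n := by exact_mod_cast hn
  have hcr : ∀ i : ℕ, Continuous fun x : unitInterval => ramp n i x :=
    fun i => (ramp_cont n i).comp continuous_subtype_val
  have hc : ∀ i : Fin n, Continuous fun x : unitInterval =>
      ramp n (i + 1) (x:ℝ) - ramp n i x := fun i => (hcr _).sub (hcr _)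
  refine ⟨fun i x => ramp n (i + 1) x - ramp n i x, ⟨fun i => (hc i).measurable,
    fun i x => sub_nonneg.2 (ramp_mono _ _ _), fun x => ?_, fun i => ?_⟩, hc, ?_⟩
  · rw [Fin.sum_univ_eq_sum_range (fun i => ramp n (i + 1) (x:ℝ) - ramp n i x),
      Finset.sum_range_sub (fun i => ramp n i (x:ℝ))]
    simp [ramp, hn.ne']
  · rw [integral_sub (cont_int (hcr _)) (cont_int (hcr _)), ramp_integral n _ hn (by omega),
      ramp_integral n _ hn (by omega)]
    push_cast
    ring
  · intro i x y hx hy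
    obtain ⟨a, b⟩ := ramp_supp n i i.2 x hx
    obtain ⟨a2, b2⟩ := ramp_supp n i i.2 y hy
    rw [Subtype.dist_eq, Real.dist_eq, le_div_iff₀ hn']
    rw [← abs_of_pos hn', ← abs_mul, abs_le]
    constructor <;> nlinarith

/-- approximate identity -/
lemma approx_id (ν : SGraphon) {F : Sq → ℝ} (hF : Continuous F) {ε : ℝ} (hε : 0 < ε) :
    ∃ N : ℕ, ∀ n, N ≤ n → ∀ (hn : 0 < n) (h : Fin n → unitInterval → ℝ),
      IsFracPartition n h → (∀ i, Continuous (h i)) →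
      (∀ i x y, h i x ≠ 0 → h i y ≠ 0 → dist x y ≤ 2 / n) →
      |∫ p, F p ∂(PhiMeas (kern h h) ν.toMeasure) - ∫ p, F p ∂ν.toMeasure| ≤ ε := by
  obtain ⟨δ, hδ, hu⟩ := Metric.uniformContinuous_iff.1
    (CompactSpace.uniformContinuous_of_continuous hF) ε hε
  obtain ⟨N, hN⟩ := exists_nat_gt (2 / δ)
  refine ⟨N, fun n hnN hn h hP hc hs => ?_⟩
  have hn' : (0:ℝ) < n := by exact_mod_cast hn
  have hnd : 2 / (n:ℝ) < δ := by
    rw [div_lt_iff₀ hδ] at hN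
    rw [div_lt_iff₀ hn']
    have : (N:ℝ) ≤ n := by exact_mod_cast hnN
    nlinarith
  have hfd := kern_fd hn hc hc hP hP
  have hkc := kern_cont hc hc
  have hd : ∀ x u, kern h h (x, u) ≠ 0 → dist u x < δ := by
    intro x u hxu
    have : ∃ i ∈ Finset.univ, h i x * h i u ≠ 0 := by
      apply Finset.exists_ne_zero_of_sum_ne_zero
      exact right_ne_zero_of_mul hxu
    obtain ⟨i, -, hi⟩ := this
    exact (hs i u x (right_ne_zero_of_mul hi) (left_ne_zero_of_mul hi)).trans_lt hnd
  rw [intPhi hfd hkc _ hF]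
  have hin : Continuous fun q : Sq => ∫ p : Sq, kern h h (q.1, p.1) * kern h h (q.2, p.2) * F p := by
    have := continuous_parametric_integral_of_continuous (μ := (volume : Measure Sq))
      (f := fun q p : Sq => kern h h (q.1, p.1) * kern h h (q.2, p.2) * F p)
      (by unfold Function.uncurry; fun_prop) (s := Set.univ) isCompact_univ
    simpa using this
  rw [← integral_sub (cont_int hin) (cont_int hF)]
  have key : ∀ q : Sq, ‖(∫ p : Sq, kern h h (q.1, p.1) * kern h h (q.2, p.2) * F p) - F q‖ ≤ ε := by
    intro q
    have e1 : F q = ∫ p : Sq, kern h h (q.1, p.1) * kern h h (q.2, p.2) * F q := by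
      rw [integral_mul_const, row2 hfd, one_mul]
    have e2 : ε = ∫ p : Sq, kern h h (q.1, p.1) * kern h h (q.2, p.2) * ε := by
      rw [integral_mul_const, row2 hfd, one_mul]
    rw [e1, ← integral_sub (cont_int (by fun_prop)) (cont_int (by fun_prop))]
    rw [e2]
    apply norm_integral_le_of_norm_le (cont_int (by fun_prop))
    refine Filter.Eventually.of_forall fun p => ?_
    rw [← mul_sub, norm_mul, Real.norm_of_nonneg (mul_nonneg (hfd.nonneg _) (hfd.nonneg _))]
    by_cases h1 : kern h h (q.1, p.1) = 0
    · simp [h1]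
    by_cases h2 : kern h h (q.2, p.2) = 0
    · simp [h2]
    refine mul_le_mul_of_nonneg_left ?_ (mul_nonneg (hfd.nonneg _) (hfd.nonneg _))
    have := hu (a := p) (b := q) (by
      rw [Prod.dist_eq]
      exact max_lt (hd _ _ h1) (hd _ _ h2))
    rw [Real.dist_eq] at this
    exact this.le
  have := norm_integral_le_of_norm_le_const (μ := ν.toMeasure) (Filter.Eventually.of_forall key)
  simpa using this

lemma simplex_retract {k : ℕ} (hk : 0 < k) (b g : Fin k → ℝ) (hg : ∑ i, g i = 1)
    (hg0 : ∀ i, 0 ≤ g i) (i : Fin k) :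
    |g i - (max (b i) 0 / max (∑ j, max (b j) 0) 1 +
      (1 - (∑ j, max (b j) 0) / max (∑ j, max (b j) 0) 1) / k)| ≤ 3 * ∑ j, |g j - b j| := by
  have hk1 : (1:ℝ) ≤ k := by exact_mod_cast hk
  set d : Fin k → ℝ := fun j => max (b j) 0 with hd
  set S : ℝ := ∑ j, d j with hS
  set m : ℝ := max S 1 with hm
  set E : ℝ := ∑ j, |g j - b j| with hE
  have m1 : 1 ≤ m := le_max_right _ _
  have mS : S ≤ m := le_max_left _ _
  have d0 : ∀ j, 0 ≤ d j := fun j => le_max_right _ _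
  have hgd : ∀ j, |g j - d j| ≤ |g j - b j| := by
    intro j
    have := hg0 j
    simp only [hd]
    rcases le_total (b j) 0 with h | h
    · rw [max_eq_right h, abs_of_nonneg (by linarith), abs_of_nonneg (by linarith)]
      linarith
    · rw [max_eq_left h]
  have hSE : |1 - S| ≤ E := by
    rw [← hg, hS, ← Finset.sum_sub_distrib]
    exact (Finset.abs_sum_le_sum_abs _ _).trans (Finset.sum_le_sum fun j _ => hgd j)
  have hiE : |g i - d i| ≤ E := (hgd i).trans
    (Finset.single_le_sum (f := fun j => |g j - b j|) (fun j _ => abs_nonneg _) (Finset.mem_univ i))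
  have hdS : d i ≤ S := Finset.single_le_sum (fun j _ => d0 j) (Finset.mem_univ i)
  have hmS : m - 1 ≤ |1 - S| := by
    rcases le_total S 1 with h | h
    · rw [hm, max_eq_right h]; simp
    · rw [hm, max_eq_left h, abs_sub_comm]; exact le_abs_self _
  have hmS' : m - S ≤ |1 - S| := by
    rcases le_total S 1 with h | h
    · rw [hm, max_eq_right h]; exact le_abs_self _
    · rw [hm, max_eq_left h]; simp
  have A1 : d i - d i / m ≤ E := by
    have : d i - d i / m = (d i / m) * (m - 1) := by field_simp
    rw [this]
    have h1 : d i / m ≤ 1 := by rw [div_le_one (by linarith)]; linarith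
    have h2 : 0 ≤ d i / m := div_nonneg (d0 i) (by linarith)
    nlinarith
  have A1' : 0 ≤ d i - d i / m := sub_nonneg.2 (div_le_self (d0 i) m1)
  have A2' : 0 ≤ 1 - S / m := by
    rw [sub_nonneg, div_le_one (by linarith)]; exact mS
  have A2 : 1 - S / m ≤ E := by
    have : 1 - S / m = (m - S) / m := by field_simp
    rw [this]
    exact (div_le_self (by linarith) m1).trans (hmS'.trans hSE)
  have A3 : (1 - S / m) / k ≤ E := (div_le_self A2' hk1).trans A2
  have A3' : 0 ≤ (1 - S / m) / k := div_nonneg A2' (by linarith)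
  rw [abs_le] at hiE ⊢
  constructor <;> linarith [hiE.1, hiE.2]

lemma part_le_one {k : ℕ} {g : Fin k → unitInterval → ℝ} (hg : IsFracPartition k g) (i : Fin k)
    (x : unitInterval) : g i x ≤ 1 := by
  rw [← hg.2.2.1 x]
  exact Finset.single_le_sum (f := fun j => g j x) (fun j _ => hg.2.1 j x) (Finset.mem_univ i)

lemma bdd_int {X : Type*} [MeasurableSpace X] {μ : Measure X} [IsFiniteMeasure μ] {f : X → ℝ}
    (hf : Measurable f) (h0 : ∀ x, 0 ≤ f x) (h1 : ∀ x, f x ≤ 1) : Integrable f μ := by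
  refine Integrable.of_bound hf.aestronglyMeasurable 1 (Filter.Eventually.of_forall fun x => ?_)
  rw [Real.norm_of_nonneg (h0 x)]
  exact h1 x

lemma part_approx {k : ℕ} (hk : 0 < k) {g : Fin k → unitInterval → ℝ} (hg : IsFracPartition k g)
    (σ : Measure unitInterval) [IsFiniteMeasure σ] (hσ : volume ≤ σ) (hσ3 : σ.real Set.univ ≤ 3)
    {t : ℝ} (ht : 0 < t) (ht1 : t ≤ 1) :
    ∃ c : Fin k → unitInterval → ℝ, IsFracPartition k c ∧ (∀ i, Continuous (c i)) ∧
      ∀ i, ∫ x, |g i x - c i x| ∂σ ≤ 10 * t := by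
  have hk1 : (1:ℝ) ≤ k := by exact_mod_cast hk
  have hk0 : (0:ℝ) < k := by linarith
  have hgi : ∀ i, Integrable (g i) σ := fun i => bdd_int (hg.1 i) (hg.2.1 i) (part_le_one hg i)
  have hgl : ∀ i, Integrable (g i) volume :=
    fun i => bdd_int (hg.1 i) (hg.2.1 i) (part_le_one hg i)
  have hη : 0 < t / (3 * k ^ 2) := by positivity
  choose b hb _ using fun i => (hgi i).exists_boundedContinuous_integral_sub_le hη
  have hbc : ∀ i, Continuous (b i) := fun i => (b i).continuous
  set S : unitInterval → ℝ := fun x => ∑ j, max (b j x) 0 with hS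
  have hSc : Continuous S := by rw [hS]; fun_prop
  set m : unitInterval → ℝ := fun x => max (S x) 1 with hm
  have hmc : Continuous m := by rw [hm]; fun_prop
  have m1 : ∀ x, 1 ≤ m x := fun x => le_max_right _ _
  have m0 : ∀ x, m x ≠ 0 := fun x => by have := m1 x; positivity
  set c' : Fin k → unitInterval → ℝ := fun i x => max (b i x) 0 / m x + (1 - S x / m x) / k with hc'
  have hcc' : ∀ i, Continuous (c' i) := fun i => by
    rw [hc']
    have := hbc i
    exact ((this.max continuous_const).div hmc m0).add
      ((continuous_const.sub (hSc.div hmc m0)).div_const _)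
  have hc0 : ∀ i x, 0 ≤ c' i x := fun i x => by
    have h1 : 0 ≤ 1 - S x / m x := by
      rw [sub_nonneg, div_le_one (by linarith [m1 x])]; exact le_max_left _ _
    exact add_nonneg (div_nonneg (le_max_right _ _) (by linarith [m1 x])) (div_nonneg h1 hk0.le)
  have hcs : ∀ x, ∑ i, c' i x = 1 := fun x => by
    simp only [hc']
    rw [Finset.sum_add_distrib, ← Finset.sum_div]
    simp only [Finset.sum_const, Finset.card_univ, Fintype.card_fin, nsmul_eq_mul]
    field_simp
    simp [hS]
  have hc1 : ∀ i x, c' i x ≤ 1 := fun i x => by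
    rw [← hcs x]
    exact Finset.single_le_sum (f := fun j => c' j x) (fun j _ => hc0 j x) (Finset.mem_univ i)
  have hbi : ∀ j, Integrable (fun x => |g j x - b j x|) σ :=
    fun j => ((hgi j).sub (cont_int (hbc j))).abs
  have hci : ∀ j, Integrable (fun x => |g j x - c' j x|) σ :=
    fun j => ((hgi j).sub (cont_int (hcc' j))).abs
  have herr : ∀ i, ∫ x, |g i x - c' i x| ∂σ ≤ t / k := by
    intro i
    calc ∫ x, |g i x - c' i x| ∂σ ≤ ∫ x, 3 * ∑ j, |g j x - b j x| ∂σ := by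
          refine integral_mono (hci i) ((integrable_finsetSum _ fun j _ => hbi j).const_mul 3)
            fun x => ?_
          exact simplex_retract hk (fun j => b j x) (fun j => g j x) (hg.2.2.1 x)
            (fun j => hg.2.1 j x) i
      _ = 3 * ∑ j, ∫ x, |g j x - b j x| ∂σ := by
          rw [integral_const_mul, integral_finsetSum _ fun j _ => hbi j]
      _ ≤ 3 * ∑ j : Fin k, t / (3 * k ^ 2) := by
          gcongr with j
          exact hb j
      _ = t / k := by
          simp only [Finset.sum_const, Finset.card_univ, Fintype.card_fin, nsmul_eq_mul]
          field_simp
  set a : Fin k → ℝ := fun i => ∫ x, c' i x with ha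
  have hak : ∀ i, |1 / k - a i| ≤ t / k := by
    intro i
    rw [← hg.2.2.2 i, ha, ← integral_sub (hgl i) (cont_int (hcc' i))]
    refine (abs_integral_le_integral_abs).trans (le_trans ?_ (herr i))
    exact integral_mono_measure hσ (Filter.Eventually.of_forall fun x => abs_nonneg _) (hci i)
  have has : ∑ i, a i = 1 := by
    rw [ha, ← integral_finsetSum _ fun j _ => cont_int (hcc' j)]
    simp [hcs]
  have hcC : ∀ i, Continuous fun x => (1 - t) * (c' i x - a i + 1 / k) + t / k := fun i => by
    have := hcc' i
    fun_prop
  refine ⟨fun i x => (1 - t) * (c' i x - a i + 1 / k) + t / k,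
    ⟨fun i => (hcC i).measurable, fun i x => ?_, fun x => ?_, fun i => ?_⟩, hcC, fun i => ?_⟩
  · have h1 := abs_le.1 (hak i)
    have h2 : -(t / k) ≤ (1 - t) * (1 / k - a i) := by
      have h3 : 0 ≤ t / k := by positivity
      nlinarith [h1.1, h1.2]
    have h4 : 0 ≤ (1 - t) * c' i x := mul_nonneg (by linarith) (hc0 i x)
    nlinarith
  · rw [Finset.sum_add_distrib, ← Finset.mul_sum, Finset.sum_add_distrib, Finset.sum_sub_distrib,
      hcs, has]
    simp only [Finset.sum_const, Finset.card_univ, Fintype.card_fin, nsmul_eq_mul]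
    field_simp
    ring
  · have hc'I : Integrable (c' i) := cont_int (hcc' i)
    have hc'J : Integrable (fun x => c' i x - a i) := hc'I.sub (integrable_const _)
    rw [integral_add (cont_int (by have := hcc' i; fun_prop)) (integrable_const _),
      integral_const_mul, integral_add hc'J (integrable_const _),
      integral_sub hc'I (integrable_const _)]
    simp only [integral_const, probReal_univ, one_smul]
    change (1 - t) * (a i - a i + 1 / k) + t / k = 1 / k
    ring
  · have hpt : ∀ x, |g i x - ((1 - t) * (c' i x - a i + 1 / k) + t / k)| ≤
        |g i x - c' i x| + 3 * t := by
      intro x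
      have e : g i x - ((1 - t) * (c' i x - a i + 1 / k) + t / k) =
        (g i x - c' i x) + (t * c' i x - (1 - t) * (1 / k - a i) - t / k) := by ring
      rw [e]
      refine (abs_add_le _ _).trans (add_le_add le_rfl ?_)
      have h1 := abs_le.1 (hak i)
      have h3 : 0 ≤ t / k := by positivity
      have h5 : t / k ≤ t := div_le_self ht.le hk1
      have h6 := hc0 i x
      have h7 := hc1 i x
      have h8 : t * c' i x ≤ t := by nlinarith
      have h9 : 0 ≤ t * c' i x := by positivity
      have h2 : -(t / k) ≤ (1 - t) * (1 / k - a i) := by nlinarith [h1.1, h1.2]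
      have h2' : (1 - t) * (1 / k - a i) ≤ t / k := by nlinarith [h1.1, h1.2]
      rw [abs_le]
      constructor <;> linarith
    calc _ ≤ ∫ x, (|g i x - c' i x| + 3 * t) ∂σ :=
          integral_mono ((hgi i).sub (cont_int (hcC i))).abs ((hci i).add (integrable_const _)) hpt
      _ = ∫ x, |g i x - c' i x| ∂σ + σ.real Set.univ * (3 * t) := by
          rw [integral_add (hci i) (integrable_const _), integral_const, smul_eq_mul]
      _ ≤ t / k + 3 * (3 * t) := by
          gcongr
          exact herr i
      _ ≤ 10 * t := by
          have h5 : t / k ≤ t := div_le_self ht.le hk1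
          linarith

lemma mat_approx {k : ℕ} (hk : 0 < k) {g : Fin k → unitInterval → ℝ} (hg : IsFracPartition k g)
    (μ : Measure Sq) [IsProbabilityMeasure μ] {ε : ℝ} (hε : 0 < ε) :
    ∃ c : Fin k → unitInterval → ℝ, IsFracPartition k c ∧ (∀ i, Continuous (c i)) ∧
      ∀ i j, |∫ p, g i p.1 * g j p.2 ∂μ - ∫ p, c i p.1 * c j p.2 ∂μ| ≤ ε := by
  have p1 : IsProbabilityMeasure (μ.map Prod.fst) :=
    Measure.isProbabilityMeasure_map measurable_fst.aemeasurable
  have p2 : IsProbabilityMeasure (μ.map Prod.snd) :=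
    Measure.isProbabilityMeasure_map measurable_snd.aemeasurable
  set σ : Measure unitInterval := volume + (μ.map Prod.fst + μ.map Prod.snd) with hσ
  have l1 : μ.map Prod.fst ≤ σ := (Measure.le_add_right le_rfl).trans (Measure.le_add_left le_rfl)
  have l2 : μ.map Prod.snd ≤ σ := (Measure.le_add_left le_rfl).trans (Measure.le_add_left le_rfl)
  obtain ⟨c, hcP, hcc, herr⟩ := part_approx hk hg σ (Measure.le_add_right le_rfl) (by
    rw [hσ, measureReal_add_apply, measureReal_add_apply]
    simp only [probReal_univ]
    norm_num) (t := min 1 (ε / 20)) (by positivity) (min_le_left _ _)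
  refine ⟨c, hcP, hcc, fun i j => ?_⟩
  have hm : ∀ i, Measurable fun x => |g i x - c i x| :=
    fun i => continuous_abs.measurable.comp ((hg.1 i).sub (hcP.1 i))
  have hI : ∀ i, ∀ ρ : Measure unitInterval, IsFiniteMeasure ρ →
      Integrable (fun x => |g i x - c i x|) ρ := fun i ρ _ =>
    ((bdd_int (hg.1 i) (hg.2.1 i) (part_le_one hg i)).sub
      (bdd_int (hcP.1 i) (hcP.2.1 i) (part_le_one hcP i))).abs
  have f1 : ∀ i, ∫ p : Sq, |g i p.1 - c i p.1| ∂μ ≤ ε / 2 := fun i => by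
    rw [← integral_map (f := fun x => |g i x - c i x|) measurable_fst.aemeasurable
      (hm i).aestronglyMeasurable]
    refine (integral_mono_measure l1 (Filter.Eventually.of_forall fun x => abs_nonneg _)
      (hI i σ inferInstance)).trans ((herr i).trans ?_)
    linarith [min_le_right 1 (ε / 20)]
  have f2 : ∀ i, ∫ p : Sq, |g i p.2 - c i p.2| ∂μ ≤ ε / 2 := fun i => by
    rw [← integral_map (f := fun x => |g i x - c i x|) measurable_snd.aemeasurable
      (hm i).aestronglyMeasurable]
    refine (integral_mono_measure l2 (Filter.Eventually.of_forall fun x => abs_nonneg _)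
      (hI i σ inferInstance)).trans ((herr i).trans ?_)
    linarith [min_le_right 1 (ε / 20)]
  have i1 : ∀ i, Integrable (fun p : Sq => |g i p.1 - c i p.1|) μ := fun i =>
    (hI i _ inferInstance : Integrable _ (μ.map Prod.fst)).comp_measurable measurable_fst
  have i2 : ∀ i, Integrable (fun p : Sq => |g i p.2 - c i p.2|) μ := fun i =>
    (hI i _ inferInstance : Integrable _ (μ.map Prod.snd)).comp_measurable measurable_snd
  have prodI : ∀ {g : Fin k → unitInterval → ℝ}, IsFracPartition k g →
      Integrable (fun p : Sq => g i p.1 * g j p.2) μ := fun {g} hg =>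
    bdd_int (((hg.1 i).comp measurable_fst).mul ((hg.1 j).comp measurable_snd))
      (fun p => mul_nonneg (hg.2.1 _ _) (hg.2.1 _ _))
      (fun p => mul_le_one₀ (part_le_one hg _ _) (hg.2.1 _ _) (part_le_one hg _ _))
  rw [← integral_sub (prodI hg) (prodI hcP)]
  refine abs_integral_le_integral_abs.trans ?_
  calc _ ≤ ∫ p : Sq, (|g i p.1 - c i p.1| + |g j p.2 - c j p.2|) ∂μ := by
        refine integral_mono ((prodI hg).sub (prodI hcP)).abs ((i1 i).add (i2 j)) fun p => ?_
        have e : g i p.1 * g j p.2 - c i p.1 * c j p.2 =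
          (g i p.1 - c i p.1) * g j p.2 + c i p.1 * (g j p.2 - c j p.2) := by ring
        simp only [e]
        refine (abs_add_le _ _).trans ?_
        rw [abs_mul, abs_mul, abs_of_nonneg (hg.2.1 j p.2), abs_of_nonneg (hcP.2.1 i p.1)]
        exact add_le_add (mul_le_of_le_one_right (abs_nonneg _) (part_le_one hg _ _))
          (mul_le_of_le_one_left (abs_nonneg _) (part_le_one hcP _ _))
    _ = _ := integral_add (i1 i) (i2 j)
    _ ≤ ε := by linarith [f1 i, f2 j]

lemma kShape_approx {k : ℕ} (hk : 0 < k) (μ : Measure Sq) [IsProbabilityMeasure μ]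
    {M : Matrix (Fin k) (Fin k) ℝ} (hM : M ∈ kShape μ k) {ε : ℝ} (hε : 0 < ε) :
    ∃ c : Fin k → unitInterval → ℝ, IsFracPartition k c ∧ (∀ i, Continuous (c i)) ∧
      ∀ i j, |M i j - ∫ p, c i p.1 * c j p.2 ∂μ| ≤ ε := by
  have ho : IsOpen {M' : Matrix (Fin k) (Fin k) ℝ | ∀ i j, |M i j - M' i j| < ε / 2} := by
    simp only [Set.setOf_forall]
    refine isOpen_iInter_of_finite fun i => isOpen_iInter_of_finite fun j => ?_
    refine isOpen_lt ?_ continuous_const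
    have : Continuous fun M' : Matrix (Fin k) (Fin k) ℝ => M' i j := continuous_id.matrix_elem i j
    fun_prop
  obtain ⟨M', h1, g, hg, hgM⟩ := mem_closure_iff.1 hM _ ho (by
    intro i j; simpa using by positivity)
  obtain ⟨c, hcP, hcc, hc⟩ := mat_approx hk hg μ (half_pos hε)
  refine ⟨c, hcP, hcc, fun i j => ?_⟩
  have a1 := h1 i j
  have a2 := hc i j
  rw [hgM] at a1
  refine (abs_sub_le _ _ _).trans (le_trans (add_le_add a1.le a2) (by linarith))

lemma mem_kShape_of_approx {k : ℕ} (μ : Measure Sq) {M : Matrix (Fin k) (Fin k) ℝ}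
    (h : ∀ ε : ℝ, 0 < ε → ∃ M' ∈ kShape μ k, ∀ i j, |M i j - M' i j| ≤ ε) : M ∈ kShape μ k := by
  choose! M' hM' hd using h
  have hp : ∀ n : ℕ, (0:ℝ) < 1 / ((n:ℝ) + 1) := fun n => by positivity
  have ht : Tendsto (fun n : ℕ => M' (1 / ((n:ℝ) + 1))) atTop (𝓝 M) := by
    refine tendsto_pi_nhds.2 fun i => tendsto_pi_nhds.2 fun j => ?_
    rw [tendsto_iff_dist_tendsto_zero]
    refine squeeze_zero (fun _ => dist_nonneg) (fun n => ?_) tendsto_one_div_add_atTop_nhds_zero_nat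
    rw [dist_comm, Real.dist_eq]
    exact hd _ (hp n) i j
  have hcl : IsClosed (kShape μ k) := isClosed_closure
  exact hcl.mem_of_tendsto ht (Filter.Eventually.of_forall fun n => hM' _ (hp n))

/-- every s-graphon lies in its own shape -/
lemma self_mem_shape (ν : SGraphon) : ν ∈ shape ν := by
  choose h hP hc hs using fun n : ℕ => exists_part (n + 1) n.succ_pos
  refine mem_closure_of_tendsto (f := fun n : ℕ => mkPhi (kern (h n) (h n))
    (kern_fd n.succ_pos (hc n) (hc n) (hP n) (hP n)) (kern_cont (hc n) (hc n)) ν) (b := atTop) ?_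
    (Filter.Eventually.of_forall fun n => mkPhi_mem _ _ _ _)
  refine sg_tendsto fun F hF => ?_
  rw [Metric.tendsto_atTop]
  intro ε hε
  obtain ⟨N, hN⟩ := approx_id ν hF (half_pos hε)
  refine ⟨N, fun n hn => ?_⟩
  rw [Real.dist_eq, mkPhi_meas]
  exact (hN (n + 1) (by omega) n.succ_pos (h n) (hP n) (hc n) (hs n)).trans_lt (by linarith)

lemma kShape_subset {ν₁ ν₂ : SGraphon} (h : shape ν₁ ⊆ shape ν₂) (k : ℕ) (hk : 0 < k) :
    kShape ν₁.toMeasure k ⊆ kShape ν₂.toMeasure k := by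
  intro M hM
  apply mem_kShape_of_approx
  intro ε hε
  obtain ⟨c, hcP, hcc, hc⟩ := kShape_approx hk _ hM hε
  refine ⟨fun i j => ∫ p, c i p.1 * c j p.2 ∂ν₁.toMeasure, ?_, hc⟩
  have hcont : Continuous fun ν : SGraphon =>
      (fun i j => ∫ p, c i p.1 * c j p.2 ∂ν.toMeasure : Matrix (Fin k) (Fin k) ℝ) := by
    refine continuous_pi fun i => continuous_pi fun j => sg_cont ?_
    have := hcc i
    have := hcc j
    fun_prop
  refine map_mem_closure hcont (h (self_mem_shape ν₁)) ?_
  rintro ν ⟨f, hf, hfc, hν⟩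
  refine ⟨_, push_part hf hfc hcP hcc, fun i j => ?_⟩
  change ∫ p, c i p.1 * c j p.2 ∂ν.toMeasure = _
  rw [hν, push_int hf hfc _ (hcc i) (hcc j)]

lemma shape_subset {ν₁ ν₂ : SGraphon}
    (h : ∀ k : ℕ, 0 < k → kShape ν₁.toMeasure k ⊆ kShape ν₂.toMeasure k) :
    shape ν₁ ⊆ shape ν₂ := by
  refine closure_minimal ?_ isClosed_closure
  rintro ν ⟨f, hf, hfc, hν⟩
  choose h' hP hc hs using fun n : ℕ => exists_part (n + 1) n.succ_pos
  have hM : ∀ n : ℕ, (fun i j => ∫ p, h' n i p.1 * h' n j p.2 ∂ν.toMeasure :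
      Matrix (Fin (n + 1)) (Fin (n + 1)) ℝ) ∈ kShape ν₂.toMeasure (n + 1) := by
    intro n
    apply h (n + 1) n.succ_pos
    refine subset_closure ⟨_, push_part hf hfc (hP n) (hc n), fun i j => ?_⟩
    change ∫ p, h' n i p.1 * h' n j p.2 ∂ν.toMeasure = _
    rw [hν, push_int hf hfc _ (hc n i) (hc n j)]
  have hpos : ∀ n : ℕ, (0:ℝ) < 1 / (((n:ℝ) + 1) ^ 3) := fun n => by positivity
  choose c hcP hcc hcM using fun n : ℕ => kShape_approx n.succ_pos _ (hM n) (hpos n)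
  refine mem_closure_of_tendsto (f := fun n : ℕ => mkPhi (kern (c n) (h' n))
    (kern_fd n.succ_pos (hcc n) (hc n) (hcP n) (hP n)) (kern_cont (hcc n) (hc n)) ν₂) (b := atTop) ?_
    (Filter.Eventually.of_forall fun n => mkPhi_mem _ _ _ _)
  refine sg_tendsto fun F hF => ?_
  obtain ⟨C, hC⟩ := (isCompact_range (continuous_abs.comp hF)).bddAbove
  have hC' : ∀ p, |F p| ≤ C := fun p => hC ⟨p, rfl⟩
  have hdiff : ∀ n : ℕ, |∫ p, F p ∂(PhiMeas (kern (h' n) (h' n)) ν.toMeasure) -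
      ∫ p, F p ∂(PhiMeas (kern (c n) (h' n)) ν₂.toMeasure)| ≤ C * (1 / ((n:ℝ) + 1)) := by
    intro n
    rw [kern_int n.succ_pos (hc n) (hc n) (hP n) (hP n) _ hF,
      kern_int n.succ_pos (hcc n) (hc n) (hcP n) (hP n) _ hF]
    rw [← Finset.sum_sub_distrib]
    have hterm : ∀ i j, |((n + 1 : ℕ):ℝ) ^ 2 * ∫ p : Sq, h' n i p.1 * h' n j p.2 * F p| ≤ C := by
      intro i j
      have hbound : |∫ p : Sq, h' n i p.1 * h' n j p.2 * F p| ≤ (1 / ((n + 1 : ℕ):ℝ)) ^ 2 * C := by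
        have e : (1 / ((n + 1 : ℕ):ℝ)) ^ 2 * C = ∫ p : Sq, h' n i p.1 * h' n j p.2 * C := by
          rw [integral_mul_const, Measure.volume_eq_prod, integral_prod_mul, (hP n).2.2.2,
            (hP n).2.2.2, sq]
        rw [e, ← Real.norm_eq_abs]
        have := hc n i
        have := hc n j
        refine norm_integral_le_of_norm_le (cont_int (by fun_prop))
          (Filter.Eventually.of_forall fun p => ?_)
        have h0 : 0 ≤ h' n i p.1 * h' n j p.2 := mul_nonneg ((hP n).2.1 _ _) ((hP n).2.1 _ _)
        rw [norm_mul, Real.norm_of_nonneg h0]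
        exact mul_le_mul_of_nonneg_left (hC' p) h0
      rw [abs_mul, abs_of_nonneg (by positivity)]
      refine (mul_le_mul_of_nonneg_left hbound (by positivity)).trans (le_of_eq ?_)
      field_simp
    calc _ ≤ ∑ i : Fin (n + 1), ∑ j : Fin (n + 1), 1 / (((n:ℝ) + 1) ^ 3) * C := by
          refine (Finset.abs_sum_le_sum_abs _ _).trans (Finset.sum_le_sum fun i _ => ?_)
          rw [← Finset.sum_sub_distrib]
          refine (Finset.abs_sum_le_sum_abs _ _).trans (Finset.sum_le_sum fun j _ => ?_)
          rw [← sub_mul, abs_mul]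
          exact mul_le_mul (hcM n i j) (hterm i j) (abs_nonneg _) (hpos n).le
      _ = _ := by
          simp only [Finset.sum_const, Finset.card_univ, Fintype.card_fin, nsmul_eq_mul]
          push_cast
          field_simp
  have hz : Tendsto (fun n : ℕ => C * (1 / ((n:ℝ) + 1))) atTop (𝓝 0) := by
    simpa using tendsto_one_div_add_atTop_nhds_zero_nat.const_mul C
  rw [Metric.tendsto_atTop]
  intro ε hε
  obtain ⟨N, hN⟩ := approx_id ν hF (half_pos hε)
  obtain ⟨N', hN'⟩ := Filter.eventually_atTop.1 (hz.eventually (gt_mem_nhds (half_pos hε)))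
  refine ⟨max N N', fun n hn => ?_⟩
  have b1 := hN (n + 1) (by have := le_of_max_le_left hn; omega) n.succ_pos (h' n) (hP n) (hc n)
    (hs n)
  have b2 := hN' n (le_of_max_le_right hn)
  have b3 := hdiff n
  rw [Real.dist_eq, mkPhi_meas]
  rw [abs_sub_comm] at b3
  exact (abs_sub_le _ _ _).trans_lt (by linarith)

/-- Corollary `cor:shapes`. Two s-graphons have the same `k`-shapes for every
`k ∈ ℕ` if and only if their shapes coincide. -/
theorem stmt3 (ν₁ ν₂ : SGraphon) :
    (∀ k : ℕ, 0 < k → kShape ν₁.toMeasure k = kShape ν₂.toMeasure k) ↔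
      shape ν₁ = shape ν₂ := by
  constructor
  · intro h
    exact Set.Subset.antisymm (shape_subset fun k hk => (h k hk).le)
      (shape_subset fun k hk => (h k hk).ge)
  · intro h k hk
    exact Set.Subset.antisymm (kShape_subset h.le k hk) (kShape_subset h.ge k hk)

end
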